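/- There exists an absolute constant C' > 0 such that for all positive integers n, k, every t > 0, and every linear map L : ℝ^{n×n} → ℝ^k, the total variation distance between the pushforward L#G₁ and the pushforward L#D₂[t] is at most C'·t·√k/n, where D₂[t] is the uniform mixture over pairs (i,j) ∈ [n]×[n] of the law of G + t·e_i e_jᵀ with G ∼ G₁. -/

import Mathlib

open MeasureTheory ENNReal

/-- The ℓ_p norm of a vector in ℝ^n, for p ∈ [1,∞] (p : ℝ≥0∞),
with `lpNorm ∞ x = max_i |x i|`. -/
noncomputable def lpNorm (p : ℝ≥0∞) {n : ℕ} (x : Fin n → ℝ) : ℝ :=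
  if p = ∞ then ⨆ i, |x i| else (∑ i, |x i| ^ p.toReal) ^ (1 / p.toReal)

/-- The q→p operator norm of a real m×n matrix:
`opNorm q p A = sup_{x} ‖Ax‖_p / ‖x‖_q` (with the convention 0/0 = 0 at x = 0). -/
noncomputable def opNorm (q p : ℝ≥0∞) {m n : ℕ} (A : Matrix (Fin m) (Fin n) ℝ) : ℝ :=
  ⨆ x : Fin n → ℝ, lpNorm p (A.mulVec x) / lpNorm q x

instance matrixMeasurableSpace {m n : Type*} : MeasurableSpace (Matrix m n ℝ) :=
  MeasurableSpace.pi

/-- A linear map ℝ^{m×n} → ℝ^k, encoded by a k × (m·n) matrix, applied to a matrix A. -/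
def sketchApply {k m n : ℕ} (L : Matrix (Fin k) (Fin m × Fin n) ℝ)
    (A : Matrix (Fin m) (Fin n) ℝ) : Fin k → ℝ :=
  L.mulVec fun ij => A ij.1 ij.2

/-- `(S, f)` is a (k, α)-sketching family for the q→p norm of m×n matrices:
S (here μ) is a probability distribution over linear maps L : ℝ^{m×n} → ℝ^k and
f : ℝ^k → ℝ is measurable, such that for every m×n matrix A,
Pr_{L∼μ}[f(L(A)) ∈ (‖A‖_{q→p}/α, α‖A‖_{q→p})] ≥ 5/6. -/
def IsSketchingFamily (q p : ℝ≥0∞) (m n k : ℕ) (α : ℝ)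
    (μ : Measure (Matrix (Fin k) (Fin m × Fin n) ℝ)) (f : (Fin k → ℝ) → ℝ) : Prop :=
  IsProbabilityMeasure μ ∧ Measurable f ∧
  ∀ A : Matrix (Fin m) (Fin n) ℝ,
    (5/6 : ℝ≥0∞) ≤ μ {L | f (sketchApply L A) ∈
      Set.Ioo (opNorm q p A / α) (α * opNorm q p A)}

/-- Total variation distance between two measures: sup over measurable sets E of |μ(E) − ν(E)|. -/
noncomputable def tvDist {Ω : Type*} [MeasurableSpace Ω] (μ ν : Measure Ω) : ℝ :=
  ⨆ s : {s : Set Ω // MeasurableSet s}, |(μ s.1).toReal - (ν s.1).toReal|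

/-- The uniform distribution on Fin n. -/
noncomputable def uniformFin (n : ℕ) : Measure (Fin n) :=
  ((n : ℝ≥0∞))⁻¹ • ∑ i : Fin n, Measure.dirac i

/-- G₁: the distribution of an m×n random matrix with i.i.d. standard Gaussian entries. -/
noncomputable def gaussianMatrix (m n : ℕ) : Measure (Matrix (Fin m) (Fin n) ℝ) :=
  Measure.pi fun _ : Fin m => Measure.pi fun _ : Fin n => ProbabilityTheory.gaussianReal 0 1

/-- The distribution of a standard Gaussian vector in ℝ^m. -/
noncomputable def gaussianVec (m : ℕ) : Measure (Fin m → ℝ) :=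
  Measure.pi fun _ : Fin m => ProbabilityTheory.gaussianReal 0 1

/-- G₂[α]: the distribution of G + α·u·e_iᵀ where G is an i.i.d. standard Gaussian m×n
matrix, u ∈ ℝ^m an independent standard Gaussian vector, and the column index i is
uniform on Fin n, independent of (G, u). -/
noncomputable def spikedGaussian (m n : ℕ) (α : ℝ) : Measure (Matrix (Fin m) (Fin n) ℝ) :=
  Measure.map (fun x : Matrix (Fin m) (Fin n) ℝ × ((Fin m → ℝ) × Fin n) =>
      x.1 + Matrix.of fun a b => if b = x.2.2 then α * x.2.1 a else 0)
    ((gaussianMatrix m n).prod ((gaussianVec m).prod (uniformFin n)))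

/-- D₂[t]: the distribution of G + t·e_i·e_jᵀ where G is an i.i.d. standard Gaussian n×n
matrix, and the entry index (i,j) is uniform on [n]×[n], independent of G. -/
noncomputable def entrySpiked (n : ℕ) (t : ℝ) : Measure (Matrix (Fin n) (Fin n) ℝ) :=
  Measure.map (fun x : Matrix (Fin n) (Fin n) ℝ × (Fin n × Fin n) =>
      x.1 + Matrix.of fun a b => if a = x.2.1 ∧ b = x.2.2 then t else 0)
    ((gaussianMatrix n n).prod ((uniformFin n).prod (uniformFin n)))

/-!
By the Cameron–Martin formula, a standard Gaussian translated by `v` has density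
`exp (⟪v, x⟫ - ‖v‖ ^ 2 / 2)` with respect to the untranslated one. This density has variance
`exp (‖v‖ ^ 2) - 1`, so Cauchy–Schwarz bounds the total variation distance by `‖v‖` when
`‖v‖ ≤ 1`, and the bound is trivial otherwise.
A linear map `T` only sees the component of the translation orthogonal to `ker T`, so by convexity
the distance to the mixture over an orthonormal basis of `N` vectors, scaled by `t`, is at most
`|t|` times the average length of their projections onto `(ker T)ᗮ`. The squares of these lengths
add up to the trace of the projection, which is the rank of `T`, and Cauchy–Schwarz bounds the
average by `√(rank T / N)`. Here `N = n ^ 2` and `rank T ≤ k`.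
-/

open ProbabilityTheory RealInnerProductSpace

section TotalVariation

variable {Ω Ω' : Type*} [MeasurableSpace Ω] [MeasurableSpace Ω'] {μ ν : Measure Ω}

lemma tvDist_le_of_forall {c : ℝ}
    (h : ∀ s, MeasurableSet s → |μ.real s - ν.real s| ≤ c) : tvDist μ ν ≤ c :=
  have : Nonempty {s : Set Ω // MeasurableSet s} := ⟨⟨∅, .empty⟩⟩
  ciSup_le fun s => h s.1 s.2

lemma abs_measureReal_sub_le_tvDist [IsFiniteMeasure μ] [IsFiniteMeasure ν] {s : Set Ω}
    (hs : MeasurableSet s) : |μ.real s - ν.real s| ≤ tvDist μ ν := by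
  have hbdd : BddAbove (Set.range fun s : {s : Set Ω // MeasurableSet s} =>
      |μ.real s.1 - ν.real s.1|) := by
    refine ⟨max (μ.real .univ) (ν.real .univ), Set.forall_mem_range.2 fun s => ?_⟩
    exact abs_sub_le_of_nonneg_of_le
      measureReal_nonneg ((measureReal_mono s.1.subset_univ).trans (le_max_left _ _))
      measureReal_nonneg ((measureReal_mono s.1.subset_univ).trans (le_max_right _ _))
  exact le_ciSup hbdd ⟨s, hs⟩

lemma tvDist_le_one [IsProbabilityMeasure μ] [IsProbabilityMeasure ν] : tvDist μ ν ≤ 1 :=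
  tvDist_le_of_forall fun _ _ => abs_sub_le_of_nonneg_of_le measureReal_nonneg measureReal_le_one
    measureReal_nonneg measureReal_le_one

lemma tvDist_map_le [IsFiniteMeasure μ] [IsFiniteMeasure ν] {f : Ω → Ω'} (hf : Measurable f) :
    tvDist (μ.map f) (ν.map f) ≤ tvDist μ ν :=
  tvDist_le_of_forall fun s hs => by
    simpa only [map_measureReal_apply hf hs] using abs_measureReal_sub_le_tvDist (hf hs)

lemma covariance_sq_le [IsFiniteMeasure μ] {X Y : Ω → ℝ} (hX : MemLp X 2 μ) (hY : MemLp Y 2 μ) :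
    cov[X, Y; μ] ^ 2 ≤ Var[X; μ] * Var[Y; μ] := by
  have hdiscrim : discrim Var[Y; μ] (2 * cov[X, Y; μ]) Var[X; μ] ≤ 0 := by
    refine discrim_le_zero fun c => ?_
    have hvar := variance_nonneg (X + c • Y) μ
    rw [variance_add hX (hY.const_smul c), covariance_smul_right, variance_smul] at hvar
    linarith
  rw [discrim] at hdiscrim
  linarith

/- `ν s - μ s` is the covariance under `μ` of the density and the indicator of `s`, and the latter
has variance at most `1 / 4`. -/
lemma tvDist_withDensity_le [IsProbabilityMeasure μ] {f : Ω → ℝ} (hf0 : 0 ≤ f)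
    (hf : MemLp f 2 μ) (hf1 : ∫ x, f x ∂μ = 1) :
    tvDist μ (μ.withDensity fun x => ENNReal.ofReal (f x)) ≤ √Var[f; μ] / 2 := by
  refine tvDist_le_of_forall fun s hs => ?_
  set g : Ω → ℝ := s.indicator 1
  have hg : MemLp g 2 μ := (memLp_const 1).indicator hs
  have hcov : μ.real s - (μ.withDensity fun x => ENNReal.ofReal (f x)).real s
      = -cov[g, f; μ] := by
    have hgf : g * f = s.indicator f := by
      ext x
      by_cases hx : x ∈ s <;> simp [g, hx]
    rw [covariance_eq_sub hg hf, hgf, integral_indicator hs, hf1, integral_indicator_one hs,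
      measureReal_def (μ.withDensity _), withDensity_apply _ hs,
      ← integral_eq_lintegral_of_nonneg_ae (ae_of_all _ hf0) hf.1.restrict]
    ring
  have hvar : Var[g; μ] ≤ (1 / 2) ^ 2 := by
    refine (variance_le_sq_of_bounded (a := 0) (b := 1) (ae_of_all _ fun x => ?_)
      hg.1.aemeasurable).trans_eq (by norm_num)
    exact ⟨Set.indicator_nonneg (fun _ _ => zero_le_one) x,
      Set.indicator_le_self' (fun _ _ => zero_le_one) x⟩
  rw [hcov, abs_neg, ← Real.sqrt_sq_eq_abs]
  calc √(cov[g, f; μ] ^ 2) ≤ √((1 / 2) ^ 2 * Var[f; μ]) := by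
        gcongr
        exact (covariance_sq_le hg hf).trans
          (mul_le_mul_of_nonneg_right hvar (variance_nonneg f μ))
    _ = √Var[f; μ] / 2 := by
        rw [Real.sqrt_mul (by positivity), Real.sqrt_sq (by positivity)]
        ring

end TotalVariation

section UniformMixture

variable {ι κ Ω Ω' : Type*} [Fintype ι] [Fintype κ] [MeasurableSpace Ω] [MeasurableSpace Ω']

/-- The law obtained by drawing an index `i : ι` uniformly and then sampling from `ν i`
(the zero measure if `ι` is empty). -/
noncomputable def uniformMixture (ν : ι → Measure Ω) : Measure Ω :=
  (Fintype.card ι : ℝ≥0∞)⁻¹ • ∑ i, ν i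

lemma map_uniformMixture (ν : ι → Measure Ω) {f : Ω → Ω'} (hf : Measurable f) :
    (uniformMixture ν).map f = uniformMixture fun i => (ν i).map f := by
  rw [uniformMixture, Measure.map_smul, Measure.map_finset_sum hf.aemeasurable, uniformMixture]

lemma uniformMixture_prod_uniformMixture (μ : ι → Measure Ω) (ν : κ → Measure Ω')
    [∀ j, SFinite (ν j)] :
    (uniformMixture μ).prod (uniformMixture ν)
      = uniformMixture fun p : ι × κ => (μ p.1).prod (ν p.2) := by
  simp only [uniformMixture, Fintype.card_prod, Nat.cast_mul, ← Measure.sum_fintype]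
  rw [Measure.prod_smul_left, Measure.prod_smul_right, Measure.prod_sum, smul_smul,
    ENNReal.mul_inv (.inr (ENNReal.natCast_ne_top _)) (.inl (ENNReal.natCast_ne_top _))]

lemma prod_uniformMixture (μ : Measure Ω) (ν : κ → Measure Ω') [∀ j, SFinite (ν j)] :
    μ.prod (uniformMixture ν) = uniformMixture fun j => μ.prod (ν j) := by
  simp only [uniformMixture, ← Measure.sum_fintype]
  rw [Measure.prod_smul_right, Measure.prod_sum_right]

lemma uniformMixture_real (ν : ι → Measure Ω) [∀ i, IsFiniteMeasure (ν i)] (s : Set Ω) :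
    (uniformMixture ν).real s = (∑ i, (ν i).real s) / Fintype.card ι := by
  rw [uniformMixture, measureReal_ennreal_smul_apply, ENNReal.toReal_inv, ENNReal.toReal_natCast,
    measureReal_def, Measure.finsetSum_apply, ENNReal.toReal_sum fun i _ => measure_ne_top (ν i) s,
    inv_mul_eq_div]
  rfl

lemma tvDist_uniformMixture_le [Nonempty ι] (μ : Measure Ω) (ν : ι → Measure Ω)
    [IsFiniteMeasure μ] [∀ i, IsFiniteMeasure (ν i)] :
    tvDist μ (uniformMixture ν) ≤ (∑ i, tvDist μ (ν i)) / Fintype.card ι := by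
  refine tvDist_le_of_forall fun s hs => ?_
  have havg : μ.real s - (uniformMixture ν).real s
      = (∑ i, (μ.real s - (ν i).real s)) / Fintype.card ι := by
    rw [uniformMixture_real, Finset.sum_sub_distrib, sub_div, Finset.sum_const, Finset.card_univ,
      nsmul_eq_mul, mul_div_cancel_left₀ _ (by simp)]
  rw [havg, abs_div, Nat.abs_cast]
  gcongr
  exact (Finset.abs_sum_le_sum_abs _ _).trans
    (Finset.sum_le_sum fun i _ => abs_measureReal_sub_le_tvDist hs)

end UniformMixture

section Density

lemma lintegral_pi_prod {ι : Type*} [Fintype ι] {α : ι → Type*} [∀ i, MeasurableSpace (α i)]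
    (μ : ∀ i, Measure (α i)) [∀ i, IsProbabilityMeasure (μ i)] {f : ∀ i, α i → ℝ≥0∞}
    (hf : ∀ i, Measurable (f i)) :
    ∫⁻ x, ∏ i, f i (x i) ∂Measure.pi μ = ∏ i, ∫⁻ x, f i x ∂μ i := by
  calc ∫⁻ x, ∏ i, f i (x i) ∂Measure.pi μ = ∏ i, ∫⁻ x, f i (x i) ∂Measure.pi μ :=
        lintegral_prod_eq_prod_lintegral_of_indepFun Finset.univ (fun i (x : ∀ i, α i) => f i (x i))
          (iIndepFun_pi fun i => (hf i).aemeasurable) fun i => (hf i).comp (measurable_pi_apply i)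
    _ = ∏ i, ∫⁻ x, f i x ∂μ i :=
        Finset.prod_congr rfl fun i _ => (measurePreserving_eval μ i).lintegral_comp (hf i)

lemma pi_withDensity {ι : Type*} [Fintype ι] {α : ι → Type*} [∀ i, MeasurableSpace (α i)]
    (μ : ∀ i, Measure (α i)) [∀ i, IsProbabilityMeasure (μ i)] {f : ∀ i, α i → ℝ≥0∞}
    (hf : ∀ i, Measurable (f i)) [∀ i, SigmaFinite ((μ i).withDensity (f i))] :
    Measure.pi (fun i => (μ i).withDensity (f i))
      = (Measure.pi μ).withDensity fun x => ∏ i, f i (x i) := by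
  refine Measure.pi_eq fun s hs => ?_
  have hind (x : ∀ i, α i) : (Set.univ.pi s).indicator (fun x => ∏ i, f i (x i)) x
      = ∏ i, (s i).indicator (f i) (x i) := by
    classical
    by_cases hx : ∀ i, x i ∈ s i
    · simp [hx]
    · obtain ⟨i, hi⟩ := not_forall.1 hx
      rw [Set.indicator_of_notMem (by simpa using hx),
        Finset.prod_eq_zero (Finset.mem_univ i) (Set.indicator_of_notMem hi _)]
  rw [withDensity_apply _ (.univ_pi hs), ← lintegral_indicator (.univ_pi hs)]
  simp_rw [hind]
  rw [lintegral_pi_prod μ fun i => (hf i).indicator (hs i)]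
  refine Finset.prod_congr rfl fun i _ => ?_
  rw [lintegral_indicator (hs i), withDensity_apply _ (hs i)]

lemma map_withDensity_comp {Ω Ω' : Type*} [MeasurableSpace Ω] [MeasurableSpace Ω'] (μ : Measure Ω)
    {g : Ω → Ω'} (hg : Measurable g) {f : Ω' → ℝ≥0∞} (hf : Measurable f) :
    (μ.withDensity (f ∘ g)).map g = (μ.map g).withDensity f := by
  ext s hs
  rw [Measure.map_apply hg hs, withDensity_apply _ (hg hs), withDensity_apply _ hs,
    setLIntegral_map hs hf hg]
  rfl

end Density

section Gaussian

lemma gaussianReal_eq_withDensity (m : ℝ) :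
    gaussianReal m 1 = (gaussianReal 0 1).withDensity
      fun x => ENNReal.ofReal (Real.exp (m * x - m ^ 2 / 2)) := by
  rw [gaussianReal_of_var_ne_zero _ one_ne_zero, gaussianReal_of_var_ne_zero _ one_ne_zero,
    ← withDensity_mul _ (measurable_gaussianPDF _ _) (by fun_prop)]
  congr 1
  ext x
  simp only [Pi.mul_apply, gaussianPDF, gaussianPDFReal]
  rw [← ENNReal.ofReal_mul (by positivity), mul_assoc (√_)⁻¹, ← Real.exp_add]
  congr 3
  push_cast
  ring

lemma pi_gaussianReal_map_add_const {ι : Type*} [Fintype ι] (v : ι → ℝ) :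
    (Measure.pi fun _ : ι => gaussianReal 0 1).map (· + v)
      = (Measure.pi fun _ : ι => gaussianReal 0 1).withDensity
          fun x => ENNReal.ofReal (Real.exp (∑ i, (v i * x i - v i ^ 2 / 2))) := by
  set f : ι → ℝ → ℝ≥0∞ := fun i x => ENNReal.ofReal (Real.exp (v i * x - v i ^ 2 / 2))
  have (i : ι) : IsProbabilityMeasure ((gaussianReal 0 1).map (· + v i)) :=
    Measure.isProbabilityMeasure_map (by fun_prop)
  have (i : ι) : IsFiniteMeasure ((gaussianReal 0 1).withDensity (f i)) := by
    rw [← gaussianReal_eq_withDensity]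
    infer_instance
  calc (Measure.pi fun _ : ι => gaussianReal 0 1).map (· + v)
      = Measure.pi fun i => (gaussianReal 0 1).map (· + v i) :=
        Measure.pi_map_pi (f := fun i x => x + v i) fun i => by fun_prop
    _ = Measure.pi fun i => (gaussianReal 0 1).withDensity (f i) := by
        simp only [gaussianReal_map_add_const, zero_add, gaussianReal_eq_withDensity (v _), f]
    _ = (Measure.pi fun _ : ι => gaussianReal 0 1).withDensity fun x => ∏ i, f i (x i) :=
        pi_withDensity _ fun i => by fun_prop
    _ = _ := by
        simp only [f, Real.exp_sum, ENNReal.ofReal_prod_of_nonneg fun _ _ => (Real.exp_pos _).le]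

variable {E : Type*} [NormedAddCommGroup E] [InnerProductSpace ℝ E] [FiniteDimensional ℝ E]
  [MeasurableSpace E] [BorelSpace E]

/-- The Cameron–Martin density of the standard Gaussian measure on `E` translated by `v`, with
respect to the standard Gaussian measure itself. -/
noncomputable def cameronMartinDensity (v x : E) : ℝ :=
  Real.exp (⟪v, x⟫ - ‖v‖ ^ 2 / 2)

omit [FiniteDimensional ℝ E] in
@[fun_prop]
lemma measurable_cameronMartinDensity (v : E) : Measurable (cameronMartinDensity v) := by
  unfold cameronMartinDensity
  fun_prop

lemma stdGaussian_map_add_const (v : E) :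
    (stdGaussian E).map (· + v) = (stdGaussian E).withDensity
      fun x => ENNReal.ofReal (cameronMartinDensity v x) := by
  set b := stdOrthonormalBasis ℝ E
  set γ := Measure.pi fun _ : Fin (Module.finrank ℝ E) => gaussianReal 0 1
  set g : (Fin (Module.finrank ℝ E) → ℝ) → E := fun x => ∑ i, x i • b i
  have hg : Measurable g := by fun_prop
  have hγ : stdGaussian E = γ.map g := rfl
  have htranslate : (· + v) ∘ g = g ∘ (· + b.repr v) := by
    ext x
    simp only [Function.comp_apply, g, Pi.add_apply, add_smul, Finset.sum_add_distrib,
      b.sum_repr]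
  have hdensity : (fun x : Fin (Module.finrank ℝ E) → ℝ =>
      Real.exp (∑ i, (b.repr v i * x i - b.repr v i ^ 2 / 2))) = cameronMartinDensity v ∘ g := by
    ext x
    simp only [Function.comp_apply, cameronMartinDensity, g, inner_sum, inner_smul_right,
      Finset.sum_sub_distrib, ← Finset.sum_div, b.repr_apply_apply, b.sum_sq_inner_left,
      real_inner_comm v, mul_comm]
  rw [hγ, Measure.map_map (by fun_prop) hg, htranslate, ← Measure.map_map hg (by fun_prop),
    pi_gaussianReal_map_add_const, ← map_withDensity_comp _ hg (by fun_prop)]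
  congr 2
  ext x
  exact congrArg ENNReal.ofReal (congrFun hdensity x)

lemma lintegral_cameronMartinDensity (v : E) :
    ∫⁻ x, ENNReal.ofReal (cameronMartinDensity v x) ∂stdGaussian E = 1 := by
  have : IsProbabilityMeasure ((stdGaussian E).map (· + v)) :=
    Measure.isProbabilityMeasure_map (by fun_prop)
  rw [← setLIntegral_univ, ← withDensity_apply _ .univ, ← stdGaussian_map_add_const, measure_univ]

omit [FiniteDimensional ℝ E] [MeasurableSpace E] [BorelSpace E] in
lemma cameronMartinDensity_nonneg (v x : E) : 0 ≤ cameronMartinDensity v x :=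
  (Real.exp_pos _).le

lemma integrable_cameronMartinDensity (v : E) :
    Integrable (cameronMartinDensity v) (stdGaussian E) := by
  refine ⟨by fun_prop, ?_⟩
  rw [hasFiniteIntegral_iff_ofReal (ae_of_all _ (cameronMartinDensity_nonneg v)),
    lintegral_cameronMartinDensity]
  exact ENNReal.one_lt_top

lemma integral_cameronMartinDensity (v : E) :
    ∫ x, cameronMartinDensity v x ∂stdGaussian E = 1 := by
  rw [integral_eq_lintegral_of_nonneg_ae (ae_of_all _ (cameronMartinDensity_nonneg v))
    (by fun_prop), lintegral_cameronMartinDensity, ENNReal.toReal_one]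

omit [FiniteDimensional ℝ E] [MeasurableSpace E] [BorelSpace E] in
lemma cameronMartinDensity_sq (v x : E) :
    cameronMartinDensity v x ^ 2
      = Real.exp (‖v‖ ^ 2) * cameronMartinDensity ((2 : ℝ) • v) x := by
  simp only [cameronMartinDensity, ← Real.exp_nat_mul, ← Real.exp_add, norm_smul,
    real_inner_smul_left, Real.norm_ofNat]
  congr 1
  push_cast
  ring

lemma memLp_two_cameronMartinDensity (v : E) :
    MemLp (cameronMartinDensity v) 2 (stdGaussian E) := by
  rw [memLp_two_iff_integrable_sq (by fun_prop)]
  simp_rw [cameronMartinDensity_sq]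
  exact (integrable_cameronMartinDensity _).const_mul _

lemma variance_cameronMartinDensity (v : E) :
    Var[cameronMartinDensity v; stdGaussian E] = Real.exp (‖v‖ ^ 2) - 1 := by
  rw [variance_eq_sub (memLp_two_cameronMartinDensity v), integral_cameronMartinDensity]
  simp_rw [Pi.pow_apply, cameronMartinDensity_sq]
  rw [integral_const_mul, integral_cameronMartinDensity]
  ring

lemma tvDist_stdGaussian_map_add_const_le (v : E) :
    tvDist (stdGaussian E) ((stdGaussian E).map (· + v)) ≤ ‖v‖ := by
  have : IsProbabilityMeasure ((stdGaussian E).map (· + v)) :=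
    Measure.isProbabilityMeasure_map (by fun_prop)
  rcases le_total 1 ‖v‖ with hv | hv
  · exact tvDist_le_one.trans hv
  have hexp : Real.exp (‖v‖ ^ 2) - 1 ≤ (2 * ‖v‖) ^ 2 := by
    have hv2 : |‖v‖ ^ 2| ≤ 1 := by
      rw [abs_of_nonneg (sq_nonneg _)]
      exact pow_le_one₀ (norm_nonneg v) hv
    have h := (le_abs_self _).trans (Real.abs_exp_sub_one_le hv2)
    rw [abs_of_nonneg (sq_nonneg _)] at h
    nlinarith [sq_nonneg ‖v‖]
  calc tvDist (stdGaussian E) ((stdGaussian E).map (· + v))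
      ≤ √Var[cameronMartinDensity v; stdGaussian E] / 2 := by
        rw [stdGaussian_map_add_const]
        exact tvDist_withDensity_le (cameronMartinDensity_nonneg v)
          (memLp_two_cameronMartinDensity v) (integral_cameronMartinDensity v)
    _ ≤ √((2 * ‖v‖) ^ 2) / 2 := by
        rw [variance_cameronMartinDensity]
        gcongr
    _ = ‖v‖ := by
        rw [Real.sqrt_sq (by positivity)]
        ring

end Gaussian

section LinearSketch

variable {ι E F : Type*} [Fintype ι] [NormedAddCommGroup E] [InnerProductSpace ℝ E]
  [FiniteDimensional ℝ E] [AddCommGroup F] [Module ℝ F]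

lemma sum_sq_norm_starProjection (b : OrthonormalBasis ι ℝ E) (U : Submodule ℝ E) :
    ∑ i, ‖U.starProjection (b i)‖ ^ 2 = Module.finrank ℝ U := by
  calc ∑ i, ‖U.starProjection (b i)‖ ^ 2 = ∑ i, ⟪b i, U.starProjection (b i)⟫ := by
        refine Finset.sum_congr rfl fun i _ => ?_
        rw [real_inner_comm]
        exact (U.re_inner_starProjection_eq_normSq (b i)).symm
    _ = LinearMap.trace ℝ E U.starProjection := (LinearMap.trace_eq_sum_inner _ b).symm
    _ = Module.finrank ℝ U :=
        LinearMap.IsProj.trace ⟨U.starProjection_apply_mem,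
          fun x hx => U.starProjection_eq_self_iff.2 hx⟩

lemma sum_norm_starProjection_le (b : OrthonormalBasis ι ℝ E) (U : Submodule ℝ E) :
    ∑ i, ‖U.starProjection (b i)‖ ≤ √(Fintype.card ι * Module.finrank ℝ U) := by
  refine Real.le_sqrt_of_sq_le (sq_sum_le_card_mul_sum_sq.trans_eq ?_)
  rw [sum_sq_norm_starProjection, Finset.card_univ]

lemma map_starProjection_orthogonal_ker (T : E →ₗ[ℝ] F) (x : E) :
    T ((LinearMap.ker T)ᗮ.starProjection x) = T x := by
  have hmem := (LinearMap.ker T)ᗮ.sub_starProjection_mem_orthogonal x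
  rw [Submodule.orthogonal_orthogonal, LinearMap.mem_ker, map_sub, sub_eq_zero] at hmem
  exact hmem.symm

lemma finrank_orthogonal_ker (T : E →ₗ[ℝ] F) :
    Module.finrank ℝ (LinearMap.ker T)ᗮ = Module.finrank ℝ (LinearMap.range T) := by
  have hker := (LinearMap.ker T).finrank_add_finrank_orthogonal
  have hrange := T.finrank_range_add_finrank_ker
  omega

variable [MeasurableSpace E] [BorelSpace E] [MeasurableSpace F]

lemma tvDist_map_stdGaussian_map_add_const_le {T : E →ₗ[ℝ] F} (hT : Measurable T) (v : E) :
    tvDist ((stdGaussian E).map T) (((stdGaussian E).map (· + v)).map T)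
      ≤ ‖(LinearMap.ker T)ᗮ.starProjection v‖ := by
  set w := (LinearMap.ker T)ᗮ.starProjection v
  have hvw : ((stdGaussian E).map (· + v)).map T = ((stdGaussian E).map (· + w)).map T := by
    rw [Measure.map_map hT (by fun_prop), Measure.map_map hT (by fun_prop)]
    congr 1
    ext x
    simp only [Function.comp_apply, map_add, w, map_starProjection_orthogonal_ker]
  rw [hvw]
  exact (tvDist_map_le hT).trans (tvDist_stdGaussian_map_add_const_le w)

theorem tvDist_map_stdGaussian_uniformMixture_le [Nonempty ι] (b : OrthonormalBasis ι ℝ E)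
    {T : E →ₗ[ℝ] F} (hT : Measurable T) (t : ℝ) :
    tvDist ((stdGaussian E).map T)
        ((uniformMixture fun i => (stdGaussian E).map (· + t • b i)).map T)
      ≤ |t| * √(Module.finrank ℝ (LinearMap.range T) / Fintype.card ι) := by
  have hcard : (0 : ℝ) < Fintype.card ι := by exact_mod_cast Fintype.card_pos
  set U := (LinearMap.ker T)ᗮ
  calc _ ≤ (∑ i, tvDist ((stdGaussian E).map T)
          (((stdGaussian E).map (· + t • b i)).map T)) / Fintype.card ι := by
        rw [map_uniformMixture _ hT]
        exact tvDist_uniformMixture_le _ _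
    _ ≤ (∑ i, ‖U.starProjection (t • b i)‖) / Fintype.card ι := by
        gcongr with i
        exact tvDist_map_stdGaussian_map_add_const_le hT _
    _ = |t| * (∑ i, ‖U.starProjection (b i)‖) / Fintype.card ι := by
        simp only [map_smul, norm_smul, Real.norm_eq_abs, Finset.mul_sum]
    _ ≤ |t| * √(Fintype.card ι * Module.finrank ℝ U) / Fintype.card ι := by
        gcongr
        exact sum_norm_starProjection_le b U
    _ = |t| * √(Module.finrank ℝ (LinearMap.range T) / Fintype.card ι) := by
        rw [finrank_orthogonal_ker, Real.sqrt_mul hcard.le, Real.sqrt_div (Nat.cast_nonneg _)]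
        field_simp
        rw [Real.sq_sqrt hcard.le]
        ring

end LinearSketch

section GaussianMatrix

variable {k m n : ℕ}

/-- The entries of a matrix as a point of Euclidean space, which identifies `gaussianMatrix` with
the standard Gaussian measure there. -/
def matrixEntries (A : Matrix (Fin m) (Fin n) ℝ) : EuclideanSpace ℝ (Fin m × Fin n) :=
  WithLp.toLp 2 fun p => A p.1 p.2

lemma measurable_matrix_uncurry :
    Measurable fun (A : Matrix (Fin m) (Fin n) ℝ) (p : Fin m × Fin n) => A p.1 p.2 :=
  measurable_pi_lambda _ fun p => (measurable_pi_apply p.2).comp (measurable_pi_apply p.1)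

lemma measurable_matrixEntries : Measurable (matrixEntries (m := m) (n := n)) :=
  (WithLp.measurable_toLp 2 _).comp measurable_matrix_uncurry

lemma measurable_matrix_add_const (V : Matrix (Fin m) (Fin n) ℝ) : Measurable (· + V) := by
  refine measurable_pi_lambda _ fun i => measurable_pi_lambda _ fun j => ?_
  have hentry : Measurable fun A : Fin m → Fin n → ℝ => A i j := by fun_prop
  exact hentry.add_const (V i j)

lemma matrixEntries_add_single (A : Matrix (Fin m) (Fin n) ℝ) (p : Fin m × Fin n) (t : ℝ) :
    matrixEntries (A + Matrix.single p.1 p.2 t)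
      = matrixEntries A + t • EuclideanSpace.basisFun (Fin m × Fin n) ℝ p := by
  ext q
  simp [matrixEntries, Matrix.single_apply, Prod.ext_iff, eq_comm]

lemma gaussianMatrix_map_matrixEntries :
    (gaussianMatrix m n).map matrixEntries = stdGaussian (EuclideanSpace ℝ (Fin m × Fin n)) := by
  have huncurry : (gaussianMatrix m n).map (fun A p => A p.1 p.2)
      = Measure.pi fun _ : Fin m × Fin n => gaussianReal 0 1 := by
    have h := Measure.infinitePi_map_curry_symm fun (_ : Fin m) (_ : Fin n) => gaussianReal 0 1
    simp only [Measure.infinitePi_eq_pi] at h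
    exact h
  rw [← map_pi_eq_stdGaussian, ← huncurry,
    Measure.map_map (WithLp.measurable_toLp 2 _) measurable_matrix_uncurry]
  rfl

instance : IsProbabilityMeasure (gaussianMatrix m n) :=
  inferInstanceAs (IsProbabilityMeasure
    (Measure.pi fun _ : Fin m => Measure.pi fun _ : Fin n => gaussianReal 0 1))

lemma entrySpiked_eq_uniformMixture (n : ℕ) (t : ℝ) :
    entrySpiked n t = uniformMixture fun p : Fin n × Fin n =>
      (gaussianMatrix n n).map (· + Matrix.single p.1 p.2 t) := by
  have huniform : uniformFin n = uniformMixture (Measure.dirac : Fin n → Measure (Fin n)) := by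
    rw [uniformFin, uniformMixture, Fintype.card_fin]
  have hadd : Measurable fun x : Matrix (Fin n) (Fin n) ℝ × (Fin n × Fin n) =>
      x.1 + Matrix.of fun a b => if a = x.2.1 ∧ b = x.2.2 then t else 0 :=
    measurable_from_prod_countable_left fun p =>
      measurable_matrix_add_const (Matrix.of fun a b => if a = p.1 ∧ b = p.2 then t else 0)
  rw [entrySpiked, huniform, uniformMixture_prod_uniformMixture, prod_uniformMixture,
    map_uniformMixture _ hadd]
  congr 1
  ext1 p
  rw [Measure.dirac_prod_dirac, Measure.prod_dirac, Measure.map_map hadd (by fun_prop)]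
  congr 1
  ext A a b
  simp [Matrix.single_apply, eq_comm]

lemma entrySpiked_map_matrixEntries (n : ℕ) (t : ℝ) :
    (entrySpiked n t).map matrixEntries = uniformMixture fun p : Fin n × Fin n =>
      (stdGaussian (EuclideanSpace ℝ (Fin n × Fin n))).map
        (· + t • EuclideanSpace.basisFun (Fin n × Fin n) ℝ p) := by
  rw [entrySpiked_eq_uniformMixture, map_uniformMixture _ measurable_matrixEntries]
  congr 1
  ext1 p
  rw [Measure.map_map measurable_matrixEntries (measurable_matrix_add_const _),
    ← gaussianMatrix_map_matrixEntries, Measure.map_map (by fun_prop) measurable_matrixEntries]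
  congr 1
  ext1 A
  exact matrixEntries_add_single A p t

/-- The sketch `sketchApply L` as a linear map on the Euclidean space of matrix entries. -/
noncomputable def sketchLinearMap (L : Matrix (Fin k) (Fin m × Fin n) ℝ) :
    EuclideanSpace ℝ (Fin m × Fin n) →ₗ[ℝ] (Fin k → ℝ) :=
  L.mulVecLin ∘ₗ (WithLp.linearEquiv 2 ℝ (Fin m × Fin n → ℝ)).toLinearMap

lemma sketchApply_eq_comp (L : Matrix (Fin k) (Fin m × Fin n) ℝ) :
    sketchApply L = sketchLinearMap L ∘ matrixEntries :=
  rfl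

lemma finrank_range_sketchLinearMap (L : Matrix (Fin k) (Fin m × Fin n) ℝ) :
    Module.finrank ℝ (LinearMap.range (sketchLinearMap L)) = L.rank := by
  rw [sketchLinearMap, LinearEquiv.range_comp, Matrix.rank]

end GaussianMatrix

theorem tv_dist_sketch_spiked_entry_general {n k : ℕ} (hn : 0 < n) (t : ℝ)
    (L : Matrix (Fin k) (Fin n × Fin n) ℝ) :
    tvDist ((gaussianMatrix n n).map (sketchApply L)) ((entrySpiked n t).map (sketchApply L))
      ≤ |t| * √L.rank / n := by
  have : NeZero n := ⟨hn.ne'⟩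
  have hL : Measurable (sketchLinearMap L) :=
    (sketchLinearMap L).continuous_of_finiteDimensional.measurable
  rw [sketchApply_eq_comp, ← Measure.map_map hL measurable_matrixEntries,
    ← Measure.map_map hL measurable_matrixEntries, gaussianMatrix_map_matrixEntries,
    entrySpiked_map_matrixEntries]
  refine (tvDist_map_stdGaussian_uniformMixture_le _ hL t).trans_eq ?_
  rw [finrank_range_sketchLinearMap, Fintype.card_prod, Fintype.card_fin, Nat.cast_mul,
    Real.sqrt_div (Nat.cast_nonneg _), Real.sqrt_mul_self (Nat.cast_nonneg _), mul_div_assoc]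

/-- There is an absolute constant C' > 0 such that for all positive n, k, every t > 0 and
every linear sketch L : ℝ^{n×n} → ℝ^k, the total variation distance between the
pushforwards of G₁ and D₂[t] under L is at most C'·t·√k/n. -/
theorem tv_dist_sketch_spiked_entry :
    ∃ C' : ℝ, 0 < C' ∧
      ∀ (n k : ℕ), 0 < n → 0 < k → ∀ t : ℝ, 0 < t →
        ∀ L : Matrix (Fin k) (Fin n × Fin n) ℝ,
          tvDist ((gaussianMatrix n n).map (sketchApply L))
              ((entrySpiked n t).map (sketchApply L))
            ≤ C' * t * Real.sqrt k / n := by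
  refine ⟨1, one_pos, fun n k hn _ t ht L =>
    (tv_dist_sketch_spiked_entry_general hn t L).trans ?_⟩
  rw [abs_of_pos ht, one_mul]
  gcongr
  simpa only [Fintype.card_fin] using L.rank_le_card_height
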